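/- Let A, B be n×n complex positive definite matrices. For every t ∈ (0, 1), λ_i(A ♮_t B) ≤ λ_i(A ◇_t B) for all i = 1, …, n (eigenvalues in nonincreasing order), and equality of all eigenvalues holds if and only if A = B. -/

import Mathlib

open scoped ComplexOrder Matrix

noncomputable section

/-- Real power of a (positive definite) matrix via the continuous functional calculus. -/
def mpow {n : ℕ} (A : Matrix (Fin n) (Fin n) ℂ) (t : ℝ) : Matrix (Fin n) (Fin n) ℂ :=
  cfc (fun x : ℝ => x ^ t) A

/-- The matrix logarithm of a (positive definite) matrix via the continuous functional calculus. -/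
def mlog {n : ℕ} (A : Matrix (Fin n) (Fin n) ℂ) : Matrix (Fin n) (Fin n) ℂ :=
  cfc Real.log A

/-- The metric geometric mean `A ♯ₜ B = A^{1/2} (A^{-1/2} B A^{-1/2})^t A^{1/2}`.
`A ♯ B` is `gmean A B (1/2)`. -/
def gmean {n : ℕ} (A B : Matrix (Fin n) (Fin n) ℂ) (t : ℝ) : Matrix (Fin n) (Fin n) ℂ :=
  mpow A (1/2) * mpow (mpow A (-(1/2)) * B * mpow A (-(1/2))) t * mpow A (1/2)

/-- The Loewner order: `A ≤ B` iff `B - A` is positive semidefinite. -/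
def LoewnerLE {n : ℕ} (A B : Matrix (Fin n) (Fin n) ℂ) : Prop :=
  (B - A).PosSemidef

/-- The near order: `A ⪯ B` iff `I ≤ A⁻¹ ♯ B` in the Loewner order. -/
def NearLE {n : ℕ} (A B : Matrix (Fin n) (Fin n) ℂ) : Prop :=
  LoewnerLE 1 (gmean A⁻¹ B (1/2))

/-- The spectral geometric mean `A ♮ₜ B = (A⁻¹ ♯ B)^t A (A⁻¹ ♯ B)^t`. -/
def smean {n : ℕ} (A B : Matrix (Fin n) (Fin n) ℂ) (t : ℝ) : Matrix (Fin n) (Fin n) ℂ :=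
  mpow (gmean A⁻¹ B (1/2)) t * A * mpow (gmean A⁻¹ B (1/2)) t

/-- The Wasserstein mean `A ◇ₜ B = [(1-t)I + t(A⁻¹ ♯ B)] A [(1-t)I + t(A⁻¹ ♯ B)]`. -/
def wmean {n : ℕ} (A B : Matrix (Fin n) (Fin n) ℂ) (t : ℝ) : Matrix (Fin n) (Fin n) ℂ :=
  (((1 - t : ℝ) : ℂ) • (1 : Matrix (Fin n) (Fin n) ℂ) + ((t : ℝ) : ℂ) • gmean A⁻¹ B (1/2)) * A *
    (((1 - t : ℝ) : ℂ) • (1 : Matrix (Fin n) (Fin n) ℂ) + ((t : ℝ) : ℂ) • gmean A⁻¹ B (1/2))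

/-- The arithmetic mean `A ∇ₜ B = (1-t)A + tB`. -/
def amean {n : ℕ} (A B : Matrix (Fin n) (Fin n) ℂ) (t : ℝ) : Matrix (Fin n) (Fin n) ℂ :=
  ((1 - t : ℝ) : ℂ) • A + ((t : ℝ) : ℂ) • B

/-- The matrix absolute value `|X| = (XᴴX)^{1/2}`. -/
def matAbs {n : ℕ} (X : Matrix (Fin n) (Fin n) ℂ) : Matrix (Fin n) (Fin n) ℂ :=
  mpow (Xᴴ * X) (1/2)

/-- The eigenvalues of a Hermitian matrix listed in nonincreasing order:
`eigDesc hA i` is `λ_{i+1}(A)`, so `eigDesc hA 0 = λ₁(A) ≥ eigDesc hA 1 = λ₂(A) ≥ ⋯`. -/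
def eigDesc {n : ℕ} {A : Matrix (Fin n) (Fin n) ℂ} (hA : A.IsHermitian) : Fin n → ℝ :=
  fun i => (hA.eigenvalues ∘ Tuple.sort hA.eigenvalues) i.rev

open scoped MatrixOrder

section Helpers

variable {n : ℕ}

lemma hlp_cont (A : Matrix (Fin n) (Fin n) ℂ) (f : ℝ → ℝ) :
    ContinuousOn f (spectrum ℝ A) :=
  (Matrix.finite_real_spectrum (A := A)).continuousOn f

lemma hlp_spec_pos {A : Matrix (Fin n) (Fin n) ℂ} (hA : A.PosDef) {x : ℝ}
    (hx : x ∈ spectrum ℝ A) : 0 < x := by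
  rw [hA.1.spectrum_real_eq_range_eigenvalues] at hx
  obtain ⟨i, rfl⟩ := hx
  exact hA.eigenvalues_pos i

lemma hlp_sa {A : Matrix (Fin n) (Fin n) ℂ} (hA : A.PosDef) : IsSelfAdjoint A :=
  hA.1.isSelfAdjoint

lemma mpow_add' {A : Matrix (Fin n) (Fin n) ℂ} (hA : A.PosDef) (s t : ℝ) :
    mpow A s * mpow A t = mpow A (s + t) := by
  unfold mpow
  rw [← cfc_mul _ _ A (hlp_cont A _) (hlp_cont A _)]
  apply cfc_congr
  intro x hx
  exact (Real.rpow_add (hlp_spec_pos hA hx) s t).symm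

lemma mpow_one' {A : Matrix (Fin n) (Fin n) ℂ} (hA : A.PosDef) : mpow A 1 = A := by
  unfold mpow
  simp only [Real.rpow_one]
  exact cfc_id' ℝ A (hlp_sa hA)

lemma mpow_zero' {A : Matrix (Fin n) (Fin n) ℂ} (hA : A.PosDef) : mpow A 0 = 1 := by
  unfold mpow
  simp only [Real.rpow_zero]
  exact cfc_const_one ℝ A (hlp_sa hA)

lemma mpow_mpow' {A : Matrix (Fin n) (Fin n) ℂ} (hA : A.PosDef) (s t : ℝ) :
    mpow (mpow A s) t = mpow A (s * t) := by
  unfold mpow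
  rw [← cfc_comp' (fun x : ℝ => x ^ t) (fun x : ℝ => x ^ s) A
    (((Matrix.finite_real_spectrum (A := A)).image _).continuousOn _) (hlp_cont A _) (hlp_sa hA)]
  apply cfc_congr
  intro x hx
  exact (Real.rpow_mul (hlp_spec_pos hA hx).le s t).symm

lemma mpow_posSemidef {A : Matrix (Fin n) (Fin n) ℂ} (hA : A.PosDef) (t : ℝ) :
    (mpow A t).PosSemidef := by
  rw [← Matrix.nonneg_iff_posSemidef]
  exact cfc_nonneg fun x hx => Real.rpow_nonneg (hlp_spec_pos hA hx).le t

lemma mpow_inv_left {A : Matrix (Fin n) (Fin n) ℂ} (hA : A.PosDef) (t : ℝ) :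
    mpow A (-t) * mpow A t = 1 := by
  rw [mpow_add' hA, neg_add_cancel, mpow_zero' hA]

lemma mpow_inv_right {A : Matrix (Fin n) (Fin n) ℂ} (hA : A.PosDef) (t : ℝ) :
    mpow A t * mpow A (-t) = 1 := by
  rw [mpow_add' hA, add_neg_cancel, mpow_zero' hA]

lemma mpow_isUnit {A : Matrix (Fin n) (Fin n) ℂ} (hA : A.PosDef) (t : ℝ) :
    IsUnit (mpow A t) :=
  ⟨⟨mpow A t, mpow A (-t), mpow_inv_right hA t, mpow_inv_left hA t⟩, rfl⟩

lemma mpow_posDef {A : Matrix (Fin n) (Fin n) ℂ} (hA : A.PosDef) (t : ℝ) :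
    (mpow A t).PosDef :=
  (mpow_posSemidef hA t).posDef_iff_isUnit.2 (mpow_isUnit hA t)

lemma congr_posDef {P X : Matrix (Fin n) (Fin n) ℂ} (hP : P.PosDef) (hX : X.PosDef) :
    (P * X * P).PosDef := by
  have h1 : (P * X * P).PosSemidef := by
    have := hX.posSemidef.conjTranspose_mul_mul_same P
    rwa [hP.1.eq] at this
  exact h1.posDef_iff_isUnit.2 ((hP.isUnit.mul hX.isUnit).mul hP.isUnit)

lemma gmean_posDef {A B : Matrix (Fin n) (Fin n) ℂ} (hA : A.PosDef) (hB : B.PosDef) (t : ℝ) :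
    (gmean A B t).PosDef :=
  congr_posDef (mpow_posDef hA _) (mpow_posDef (congr_posDef (mpow_posDef hA _) hB) _)

lemma mpow_neg_one {A : Matrix (Fin n) (Fin n) ℂ} (hA : A.PosDef) : mpow A (-1) = A⁻¹ := by
  symm
  apply Matrix.inv_eq_left_inv
  have := mpow_inv_left hA 1
  rwa [mpow_one' hA] at this

lemma gmean_self {C : Matrix (Fin n) (Fin n) ℂ} (hC : C.PosDef) :
    gmean C C⁻¹ (1/2) = 1 := by
  unfold gmean
  rw [← mpow_neg_one hC, mpow_add' hC, mpow_add' hC, mpow_mpow' hC, mpow_add' hC, mpow_add' hC,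
    ← mpow_zero' hC]
  norm_num

lemma gmean_eq_one {C B : Matrix (Fin n) (Fin n) ℂ} (hC : C.PosDef) (hB : B.PosDef)
    (h : gmean C B (1/2) = 1) : B = C⁻¹ := by
  unfold gmean at h
  set Y := mpow C (-(1/2)) * B * mpow C (-(1/2)) with hY
  have hYp : Y.PosDef := congr_posDef (mpow_posDef hC _) hB
  have hXX : mpow Y (1/2) * mpow Y (1/2) = Y := by
    rw [mpow_add' hYp, add_halves, mpow_one' hYp]
  have hX : mpow Y (1/2) = mpow C (-1) := by
    calc mpow Y (1/2) = (mpow C (-(1/2)) * mpow C (1/2)) * mpow Y (1/2)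
          * (mpow C (1/2) * mpow C (-(1/2))) := by
            rw [mpow_inv_left hC, mpow_inv_right hC, one_mul, mul_one]
      _ = mpow C (-(1/2)) * (mpow C (1/2) * mpow Y (1/2) * mpow C (1/2)) * mpow C (-(1/2)) := by
            simp only [mul_assoc]
      _ = mpow C (-1) := by
            rw [h, mul_one, mpow_add' hC]; norm_num
  rw [hX] at hXX
  calc B = (mpow C (1/2) * mpow C (-(1/2))) * B * (mpow C (-(1/2)) * mpow C (1/2)) := by
            rw [mpow_inv_left hC, mpow_inv_right hC, one_mul, mul_one]
    _ = mpow C (1/2) * Y * mpow C (1/2) := by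
            rw [hY]; simp only [mul_assoc]
    _ = C⁻¹ := by
            rw [← hXX, ← mpow_neg_one hC, mpow_add' hC, mpow_add' hC, mpow_add' hC]; norm_num

lemma quad_eq {H : Matrix (Fin n) (Fin n) ℂ} (hH : H.IsHermitian) (x : Fin n → ℂ) :
    (star x ⬝ᵥ (H *ᵥ x)) = ((∑ i, hH.eigenvalues i *
      ‖((hH.eigenvectorUnitary : Matrix (Fin n) (Fin n) ℂ)ᴴ *ᵥ x) i‖ ^ 2 : ℝ) : ℂ) := by
  set U : Matrix (Fin n) (Fin n) ℂ := (hH.eigenvectorUnitary : Matrix (Fin n) (Fin n) ℂ) with hU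
  have h1 : H = U * Matrix.diagonal (fun i => (hH.eigenvalues i : ℂ)) * Uᴴ := by
    conv_lhs => rw [hH.spectral_theorem]
    rfl
  conv_lhs => rw [h1]
  rw [← Matrix.mulVec_mulVec, ← Matrix.mulVec_mulVec, Matrix.dotProduct_mulVec,
    ← Matrix.conjTranspose_conjTranspose U, ← Matrix.star_mulVec]
  rw [Matrix.conjTranspose_conjTranspose]
  simp only [dotProduct, Matrix.mulVec_diagonal, Pi.star_apply]
  push_cast
  apply Finset.sum_congr rfl
  intro i _
  rw [← Complex.conj_mul']
  simp only [Complex.star_def]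
  ring

lemma norm_eq {H : Matrix (Fin n) (Fin n) ℂ} (hH : H.IsHermitian) (x : Fin n → ℂ) :
    (star x ⬝ᵥ x) = ((∑ i,
      ‖((hH.eigenvectorUnitary : Matrix (Fin n) (Fin n) ℂ)ᴴ *ᵥ x) i‖ ^ 2 : ℝ) : ℂ) := by
  set U : Matrix (Fin n) (Fin n) ℂ := (hH.eigenvectorUnitary : Matrix (Fin n) (Fin n) ℂ) with hU
  have h1 : U * Uᴴ = 1 := Unitary.coe_mul_star_self hH.eigenvectorUnitary
  have h2 : star x ⬝ᵥ x = star (Uᴴ *ᵥ x) ⬝ᵥ (Uᴴ *ᵥ x) := by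
    rw [Matrix.star_mulVec, Matrix.conjTranspose_conjTranspose, ← Matrix.dotProduct_mulVec,
      Matrix.mulVec_mulVec, h1, Matrix.one_mulVec]
  rw [h2]
  simp only [dotProduct, Pi.star_apply]
  push_cast
  apply Finset.sum_congr rfl
  intro i _
  rw [← Complex.conj_mul']
  rfl

lemma weyl_count {H K : Matrix (Fin n) (Fin n) ℂ} (hH : H.IsHermitian) (hK : K.IsHermitian)
    (hle : (K - H).PosSemidef) (c : ℝ) :
    (Finset.univ.filter fun i => c ≤ hH.eigenvalues i).card ≤
      (Finset.univ.filter fun i => c ≤ hK.eigenvalues i).card := by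
  classical
  set U : Matrix (Fin n) (Fin n) ℂ := (hH.eigenvectorUnitary : Matrix (Fin n) (Fin n) ℂ) with hU
  set V : Matrix (Fin n) (Fin n) ℂ := (hK.eigenvectorUnitary : Matrix (Fin n) (Fin n) ℂ) with hV
  let F : (Fin n → ℂ) →ₗ[ℂ] (({i // ¬ c ≤ hH.eigenvalues i} → ℂ) ×
      ({i // c ≤ hK.eigenvalues i} → ℂ)) :=
    LinearMap.prod
      ((LinearMap.funLeft ℂ ℂ (fun i : {i // ¬ c ≤ hH.eigenvalues i} => (i : Fin n))).comp
        (Matrix.mulVecLin Uᴴ))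
      ((LinearMap.funLeft ℂ ℂ (fun i : {i // c ≤ hK.eigenvalues i} => (i : Fin n))).comp
        (Matrix.mulVecLin Vᴴ))
  have hF : Function.Injective F := by
    rw [← LinearMap.ker_eq_bot, LinearMap.ker_eq_bot']
    intro x hx
    have hx1 : ∀ i, ¬ c ≤ hH.eigenvalues i → (Uᴴ *ᵥ x) i = 0 := fun i hi =>
      congrFun (congrArg Prod.fst hx) ⟨i, hi⟩
    have hx2 : ∀ i, c ≤ hK.eigenvalues i → (Vᴴ *ᵥ x) i = 0 := fun i hi =>
      congrFun (congrArg Prod.snd hx) ⟨i, hi⟩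
    have hq := hle.re_dotProduct_nonneg x
    rw [Matrix.sub_mulVec, dotProduct_sub, quad_eq hH, quad_eq hK] at hq
    have hq' : ∑ i, hH.eigenvalues i * ‖(Uᴴ *ᵥ x) i‖ ^ 2 ≤
        ∑ i, hK.eigenvalues i * ‖(Vᴴ *ᵥ x) i‖ ^ 2 := by
      rw [← Complex.ofReal_sub] at hq
      have : (0:ℝ) ≤ _ - _ := hq
      exact sub_nonneg.1 this
    have hn : ∑ i, ‖(Uᴴ *ᵥ x) i‖ ^ 2 = ∑ i, ‖(Vᴴ *ᵥ x) i‖ ^ 2 := by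
      have := (norm_eq hH x).symm.trans (norm_eq hK x)
      exact_mod_cast this
    have h1 : c * ∑ i, ‖(Uᴴ *ᵥ x) i‖ ^ 2 ≤ ∑ i, hH.eigenvalues i * ‖(Uᴴ *ᵥ x) i‖ ^ 2 := by
      rw [Finset.mul_sum]
      apply Finset.sum_le_sum
      intro i _
      by_cases hi : c ≤ hH.eigenvalues i
      · exact mul_le_mul_of_nonneg_right hi (by positivity)
      · simp [hx1 i hi]
    have h2 : 0 ≤ ∑ i, (hK.eigenvalues i - c) * ‖(Vᴴ *ᵥ x) i‖ ^ 2 := by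
      simp only [sub_mul, Finset.sum_sub_distrib]
      rw [← Finset.mul_sum, ← hn]
      linarith
    have h3 : ∀ i ∈ Finset.univ, (hK.eigenvalues i - c) * ‖(Vᴴ *ᵥ x) i‖ ^ 2 ≤ 0 := by
      intro i _
      by_cases hi : c ≤ hK.eigenvalues i
      · simp [hx2 i hi]
      · exact mul_nonpos_of_nonpos_of_nonneg (by linarith) (by positivity)
    have h4 := (Finset.sum_eq_zero_iff_of_nonpos h3).1 (le_antisymm (Finset.sum_nonpos h3) h2)
    have h5 : ∀ i, ‖(Vᴴ *ᵥ x) i‖ ^ 2 = 0 := by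
      intro i
      by_cases hi : c ≤ hK.eigenvalues i
      · simp [hx2 i hi]
      · rcases mul_eq_zero.1 (h4 i (Finset.mem_univ i)) with h | h
        · exact absurd (by linarith) hi
        · exact h
    have h6 := norm_eq hK x
    rw [← hV, Finset.sum_eq_zero (fun i _ => h5 i), Complex.ofReal_zero] at h6
    exact dotProduct_star_self_eq_zero.1 h6
  have hfin := LinearMap.finrank_le_finrank_of_injective hF
  rw [Module.finrank_prod, Module.finrank_fintype_fun_eq_card, Module.finrank_fintype_fun_eq_card,
    Module.finrank_fintype_fun_eq_card, Fintype.card_subtype, Fintype.card_subtype] at hfin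
  have hsum := Finset.card_filter_add_card_filter_not (s := (Finset.univ : Finset (Fin n)))
    (fun i => c ≤ hH.eigenvalues i)
  rw [Finset.card_univ] at hsum
  omega

lemma count_charpoly {H : Matrix (Fin n) (Fin n) ℂ} (hH : H.IsHermitian) (c : ℝ) :
    (Finset.univ.filter fun i => c ≤ hH.eigenvalues i).card =
      (H.charpoly.roots.filter fun z => c ≤ z.re).card := by
  rw [hH.roots_charpoly_eq_eigenvalues, Multiset.filter_map, Multiset.card_map]
  rfl

lemma eigDesc_antitone {H : Matrix (Fin n) (Fin n) ℂ} (hH : H.IsHermitian) :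
    Antitone (eigDesc hH) := fun _ _ h =>
  Tuple.monotone_sort hH.eigenvalues (Fin.rev_le_rev.2 h)

lemma eigDesc_count {H : Matrix (Fin n) (Fin n) ℂ} (hH : H.IsHermitian) (c : ℝ) :
    (Finset.univ.filter fun i => c ≤ eigDesc hH i).card =
    (Finset.univ.filter fun i => c ≤ hH.eigenvalues i).card := by
  apply Finset.card_equiv (Fin.revPerm.trans (Tuple.sort hH.eigenvalues))
  intro i
  simp only [Finset.mem_filter, Finset.mem_univ, true_and]
  rfl

lemma eigDesc_sum {H : Matrix (Fin n) (Fin n) ℂ} (hH : H.IsHermitian) :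
    ((∑ i, eigDesc hH i : ℝ) : ℂ) = H.trace := by
  rw [hH.trace_eq_sum_eigenvalues]
  have : ∑ i, eigDesc hH i = ∑ i, hH.eigenvalues i :=
    Equiv.sum_comp (Fin.revPerm.trans (Tuple.sort hH.eigenvalues)) hH.eigenvalues
  rw [this]
  push_cast
  rfl

lemma eigDesc_le_of_count {H K : Matrix (Fin n) (Fin n) ℂ} (hH : H.IsHermitian)
    (hK : K.IsHermitian)
    (h : ∀ c : ℝ, (Finset.univ.filter fun i => c ≤ hH.eigenvalues i).card ≤
      (Finset.univ.filter fun i => c ≤ hK.eigenvalues i).card) (i : Fin n) :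
    eigDesc hH i ≤ eigDesc hK i := by
  by_contra hlt
  push Not at hlt
  set c := eigDesc hH i with hc
  have h1 : (Finset.Iic i).card ≤ (Finset.univ.filter fun j => c ≤ eigDesc hH j).card := by
    apply Finset.card_le_card
    intro j hj
    simpa using eigDesc_antitone hH (Finset.mem_Iic.1 hj)
  have h2 : (Finset.univ.filter fun j => c ≤ eigDesc hK j).card ≤ (Finset.Iio i).card := by
    apply Finset.card_le_card
    intro j hj
    rw [Finset.mem_Iio]
    by_contra hij
    push Not at hij
    have := eigDesc_antitone hK hij
    have hj' := (Finset.mem_filter.1 hj).2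
    linarith
  have h3 := h c
  rw [← eigDesc_count, ← eigDesc_count] at h3
  rw [Fin.card_Iic] at h1
  rw [Fin.card_Iio] at h2
  omega

lemma eigDesc_congr {H K : Matrix (Fin n) (Fin n) ℂ} (hH : H.IsHermitian)
    (hK : K.IsHermitian) (h : H = K) : eigDesc hH = eigDesc hK := by
  subst h
  rfl

lemma scalar_lt {x t : ℝ} (hx : 0 < x) (ht : 0 < t) (ht1 : t < 1) (hne : x ≠ 1) :
    x ^ t < 1 - t + t * x := by
  have := rpow_one_add_lt_one_add_mul_self (s := x - 1) (by linarith)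
    (sub_ne_zero.2 hne) ht ht1
  rw [add_sub_cancel] at this
  linarith

lemma scalar_le {x t : ℝ} (hx : 0 < x) (ht : 0 < t) (ht1 : t < 1) :
    x ^ t ≤ 1 - t + t * x := by
  by_cases h : x = 1
  · subst h; simp
  · exact (scalar_lt hx ht ht1 h).le

lemma wfac_eq {G : Matrix (Fin n) (Fin n) ℂ} (hG : G.PosDef) (t : ℝ) :
    ((1 - t : ℝ) : ℂ) • (1 : Matrix (Fin n) (Fin n) ℂ) + ((t : ℝ) : ℂ) • G =
      cfc (fun x : ℝ => 1 - t + t * x) G := by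
  rw [cfc_add (a := G) (fun _ : ℝ => 1 - t) (fun x => t * x) (hlp_cont G _) (hlp_cont G _),
    cfc_const _ G (hlp_sa hG), cfc_const_mul t (fun x => x) G (hlp_cont G _),
    cfc_id' ℝ G (hlp_sa hG)]
  rw [Algebra.algebraMap_eq_smul_one]
  congr 1

lemma key_core {A G : Matrix (Fin n) (Fin n) ℂ} (hA : A.PosDef) (hG : G.PosDef) {t : ℝ}
    (ht : 0 < t) (ht1 : t < 1) (f g : ℝ → ℝ) (hf : f = fun x => x ^ t)
    (hg : g = fun x => 1 - t + t * x)
    (hS : (cfc f G * A * cfc f G).IsHermitian) (hW : (cfc g G * A * cfc g G).IsHermitian) :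
    (∀ i, eigDesc hS i ≤ eigDesc hW i) ∧ ((∀ i, eigDesc hS i = eigDesc hW i) → G = 1) := by
  set R := mpow A (1/2) with hR
  have hRp : R.PosDef := mpow_posDef hA _
  have hRR : R * R = A := by rw [hR, mpow_add' hA, add_halves, mpow_one' hA]
  have hherm : ∀ f : ℝ → ℝ, (R * cfc (fun x => f x * f x) G * R).IsHermitian := by
    intro f
    have h1 : (cfc (fun x => f x * f x) G).IsHermitian := cfc_predicate (fun x => f x * f x) G
    have := Matrix.isHermitian_conjTranspose_mul_mul R h1
    rwa [hRp.1.eq] at this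
  have hchar : ∀ f : ℝ → ℝ, (cfc f G * A * cfc f G).charpoly =
      (R * cfc (fun x => f x * f x) G * R).charpoly := by
    intro f
    rw [cfc_mul f f G (hlp_cont G _) (hlp_cont G _)]
    have e1 : cfc f G * A * cfc f G = (cfc f G * R) * (R * cfc f G) := by
      rw [← hRR]; simp only [mul_assoc]
    have e2 : R * (cfc f G * cfc f G) * R = (R * cfc f G) * (cfc f G * R) := by
      simp only [mul_assoc]
    rw [e1, e2, Matrix.charpoly_mul_comm]
  have htr : ∀ f : ℝ → ℝ, (cfc f G * A * cfc f G).trace =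
      (R * cfc (fun x => f x * f x) G * R).trace := by
    intro f
    rw [cfc_mul f f G (hlp_cont G _) (hlp_cont G _)]
    have e1 : cfc f G * A * cfc f G = (cfc f G * R) * (R * cfc f G) := by
      rw [← hRR]; simp only [mul_assoc]
    have e2 : R * (cfc f G * cfc f G) * R = (R * cfc f G) * (cfc f G * R) := by
      simp only [mul_assoc]
    rw [e1, e2, Matrix.trace_mul_comm]
  have hD : (cfc (fun x => g x * g x) G - cfc (fun x => f x * f x) G).PosSemidef := by
    rw [← Matrix.le_iff]
    apply cfc_mono _ (hlp_cont G _) (hlp_cont G _)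
    intro x hx
    have hx0 := hlp_spec_pos hG hx
    have h1 : f x ≤ g x := by rw [hf, hg]; exact scalar_le hx0 ht ht1
    have h0 : 0 ≤ f x := by rw [hf]; exact Real.rpow_nonneg hx0.le t
    exact mul_self_le_mul_self h0 h1
  have hE : (R * cfc (fun x => g x * g x) G * R -
      R * cfc (fun x => f x * f x) G * R).PosSemidef := by
    have := hD.conjTranspose_mul_mul_same R
    rwa [hRp.1.eq, mul_sub, sub_mul] at this
  refine ⟨eigDesc_le_of_count hS hW fun c => ?_, fun heq => ?_⟩
  · rw [count_charpoly hS, count_charpoly hW, hchar, hchar, ← count_charpoly (hherm f),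
      ← count_charpoly (hherm g)]
    exact weyl_count (hherm f) (hherm g) hE c
  · have h1 : (cfc f G * A * cfc f G).trace = (cfc g G * A * cfc g G).trace := by
      rw [← eigDesc_sum hS, ← eigDesc_sum hW, Finset.sum_congr rfl fun i _ => heq i]
    rw [htr, htr] at h1
    have h2 := hE.trace_eq_zero_iff.1 (by rw [Matrix.trace_sub, h1, sub_self])
    have h3 := sub_eq_zero.1 h2
    have h4 := hRp.isUnit.mul_left_cancel (hRp.isUnit.mul_right_cancel h3)
    have h5 := eqOn_of_cfc_eq_cfc h4 (hlp_cont G _) (hlp_cont G _) (hlp_sa hG)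
    have h6 : cfc (fun x : ℝ => x) G = cfc (fun _ : ℝ => (1 : ℝ)) G := by
      apply cfc_congr
      intro x hx
      by_contra hne
      have hx0 := hlp_spec_pos hG hx
      have h1 : f x < g x := by rw [hf, hg]; exact scalar_lt hx0 ht ht1 hne
      have h0 : 0 ≤ f x := by rw [hf]; exact Real.rpow_nonneg hx0.le t
      exact (mul_self_lt_mul_self h0 h1).ne' (h5 hx)
    rwa [cfc_id' ℝ G (hlp_sa hG), cfc_const_one ℝ G (hlp_sa hG)] at h6

end Helpers

/-- for `t ∈ (0,1)`, `λᵢ(A ♮ₜ B) ≤ λᵢ(A ◇ₜ B)` for every `i`, and equality of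
all eigenvalues holds iff `A = B`. -/
theorem smean_eig_le_wmean_eig {n : ℕ} (A B : Matrix (Fin n) (Fin n) ℂ)
    (hA : A.PosDef) (hB : B.PosDef) :
    ∀ t : ℝ, 0 < t → t < 1 →
      ∀ (hS : (smean A B t).IsHermitian) (hW : (wmean A B t).IsHermitian),
        (∀ i : Fin n, eigDesc hS i ≤ eigDesc hW i) ∧
        ((∀ i : Fin n, eigDesc hS i = eigDesc hW i) ↔ A = B) := by
  intro t ht ht1 hS hW
  have hG : (gmean A⁻¹ B (1/2)).PosDef := gmean_posDef hA.inv hB _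
  have eS : smean A B t = cfc (fun x : ℝ => x ^ t) (gmean A⁻¹ B (1/2)) * A *
      cfc (fun x : ℝ => x ^ t) (gmean A⁻¹ B (1/2)) := rfl
  have eW : wmean A B t = cfc (fun x : ℝ => 1 - t + t * x) (gmean A⁻¹ B (1/2)) * A *
      cfc (fun x : ℝ => 1 - t + t * x) (gmean A⁻¹ B (1/2)) := by
    unfold wmean
    rw [wfac_eq hG]
  obtain ⟨h1, h2⟩ := key_core hA hG ht ht1 _ _ rfl rfl (eS ▸ hS) (eW ▸ hW)
  rw [← eigDesc_congr hS _ eS, ← eigDesc_congr hW _ eW] at h1 h2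
  have hAu : IsUnit A.det := (Matrix.isUnit_iff_isUnit_det A).1 hA.isUnit
  refine ⟨h1, fun h => ?_, fun h => ?_⟩
  · have := gmean_eq_one hA.inv hB (h2 h)
    rw [this, Matrix.nonsing_inv_nonsing_inv A hAu]
  · have hg1 : gmean A⁻¹ B (1/2) = 1 := by
      have := gmean_self hA.inv
      rw [Matrix.nonsing_inv_nonsing_inv A hAu] at this
      rw [← h]
      exact this
    have e : smean A B t = wmean A B t := by
      rw [eS, eW, hg1, cfc_apply_one, cfc_apply_one]
      simp
    intro i
    rw [eigDesc_congr hS hW e]
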